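/- arXiv:2105.13660 — 3 statements merged into one kernel-verified Lean document; each statement's English description precedes it below -/
import Mathlib

section
/- Let V be a finite-dimensional ℚ-vector space of dimension r. Then the kernel R(V) of the map m : V ⊗ Λ²(P²V) → P³V ⊗ P²V has dimension 6·(r+2 choose 5). -/
/-!
Common constructions: for a `ℚ`-vector space `V`, the symmetric powers
`P²V, P³V, P⁴V, P⁵V` (as `SqM V`, `CubM V`, `QuarM V`, `QuinM V`), built as iterated
quotients of tensor products, with the multiplication maps between them; the exterior
square `Λ²W` (as `AltM W`) with the wedge map; and the 5-linear map `⋆` (as `star5`).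
-/

open TensorProduct

noncomputable section

variable (V W : Type) [AddCommGroup V] [Module ℚ V] [AddCommGroup W] [Module ℚ W]

/-- The relations defining the symmetric square `P²V` as a quotient of `V ⊗ V`. -/
def sqRel : Submodule ℚ (V ⊗[ℚ] V) :=
  Submodule.span ℚ {z | ∃ x y : V, z = x ⊗ₜ[ℚ] y - y ⊗ₜ[ℚ] x}

/-- The symmetric square `P²V`. -/
abbrev SqM : Type := (V ⊗[ℚ] V) ⧸ sqRel V

/-- The product `V × V → P²V`, `(x, y) ↦ xy`. -/
def sqm : V →ₗ[ℚ] V →ₗ[ℚ] SqM V :=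
  (TensorProduct.mk ℚ V V).compr₂ (sqRel V).mkQ

/-- The relations presenting the symmetric cube `P³V` as a quotient of `V ⊗ P²V`. -/
def cubRel : Submodule ℚ (V ⊗[ℚ] SqM V) :=
  Submodule.span ℚ {z | ∃ x y w : V, z = x ⊗ₜ[ℚ] sqm V y w - y ⊗ₜ[ℚ] sqm V x w}

/-- The symmetric cube `P³V`. -/
abbrev CubM : Type := (V ⊗[ℚ] SqM V) ⧸ cubRel V

/-- The product `V × P²V → P³V`. -/
def mulC : V →ₗ[ℚ] SqM V →ₗ[ℚ] CubM V :=
  (TensorProduct.mk ℚ V (SqM V)).compr₂ (cubRel V).mkQ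

/-- The relations presenting `P⁴V` as a quotient of `V ⊗ P³V`. -/
def quarRel : Submodule ℚ (V ⊗[ℚ] CubM V) :=
  Submodule.span ℚ {z | ∃ (x y : V) (u : SqM V), z = x ⊗ₜ[ℚ] mulC V y u - y ⊗ₜ[ℚ] mulC V x u}

/-- The symmetric fourth power `P⁴V`. -/
abbrev QuarM : Type := (V ⊗[ℚ] CubM V) ⧸ quarRel V

/-- The product `V × P³V → P⁴V`. -/
def mulQ : V →ₗ[ℚ] CubM V →ₗ[ℚ] QuarM V :=
  (TensorProduct.mk ℚ V (CubM V)).compr₂ (quarRel V).mkQ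

/-- The relations presenting `P⁵V` as a quotient of `V ⊗ P⁴V`. -/
def quinRel : Submodule ℚ (V ⊗[ℚ] QuarM V) :=
  Submodule.span ℚ {z | ∃ (x y : V) (c : CubM V), z = x ⊗ₜ[ℚ] mulQ V y c - y ⊗ₜ[ℚ] mulQ V x c}

/-- The symmetric fifth power `P⁵V`. -/
abbrev QuinM : Type := (V ⊗[ℚ] QuarM V) ⧸ quinRel V

/-- The product `V × P⁴V → P⁵V`. -/
def mulQn : V →ₗ[ℚ] QuarM V →ₗ[ℚ] QuinM V :=
  (TensorProduct.mk ℚ V (QuarM V)).compr₂ (quinRel V).mkQ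

/-- The relations defining the exterior square `Λ²W` as a quotient of `W ⊗ W`. -/
def altRel2 : Submodule ℚ (W ⊗[ℚ] W) :=
  Submodule.span ℚ {z | ∃ x : W, z = x ⊗ₜ[ℚ] x}

/-- The exterior square `Λ²W`. -/
abbrev AltM : Type := (W ⊗[ℚ] W) ⧸ altRel2 W

/-- The wedge product `W × W → Λ²W`. -/
def wdg : W →ₗ[ℚ] W →ₗ[ℚ] AltM W :=
  (TensorProduct.mk ℚ W W).compr₂ (altRel2 W).mkQ

/-- The element `⋆(x₁,…,x₅) = Σ_{i ∈ ℤ/5} xᵢ ⊗ (x_{i+1}x_{i+2} ∧ x_{i+3}x_{i+4})`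
of `V ⊗ Λ²(P²V)`. -/
def star5 (x₁ x₂ x₃ x₄ x₅ : V) : V ⊗[ℚ] AltM (SqM V) :=
    x₁ ⊗ₜ[ℚ] wdg (SqM V) (sqm V x₂ x₃) (sqm V x₄ x₅)
  + x₂ ⊗ₜ[ℚ] wdg (SqM V) (sqm V x₃ x₄) (sqm V x₅ x₁)
  + x₃ ⊗ₜ[ℚ] wdg (SqM V) (sqm V x₄ x₅) (sqm V x₁ x₂)
  + x₄ ⊗ₜ[ℚ] wdg (SqM V) (sqm V x₅ x₁) (sqm V x₂ x₃)
  + x₅ ⊗ₜ[ℚ] wdg (SqM V) (sqm V x₁ x₂) (sqm V x₃ x₄)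



/-- Two tuples with the same underlying multiset differ by a permutation of the indices. -/
lemma exists_perm_of_ofFn_perm {n r : ℕ} (f g : Fin n → Fin r)
    (h : (List.ofFn f).Perm (List.ofFn g)) : ∃ σ : Equiv.Perm (Fin n), g = f ∘ σ := by
  have h1 : f ∘ Tuple.sort f = g ∘ Tuple.sort g := by
    apply List.ofFn_injective
    refine List.Perm.eq_of_pairwise' (r := (· ≤ ·)) ?_ ?_ ?_
    · exact (Tuple.monotone_sort f).sortedLE_ofFn.pairwise
    · exact (Tuple.monotone_sort g).sortedLE_ofFn.pairwise
    · exact (Equiv.Perm.ofFn_comp_perm _ f).trans (h.trans (Equiv.Perm.ofFn_comp_perm _ g).symm)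
  refine ⟨Tuple.sort f * (Tuple.sort g)⁻¹, ?_⟩
  funext x
  have := congrFun h1 ((Tuple.sort g)⁻¹ x)
  simpa using this.symm

/-- The monomial attached to a multiset of variables. -/
lemma monomial_toFinsupp {r : ℕ} (s : Multiset (Fin r)) :
    MvPolynomial.monomial (Multiset.toFinsupp s) (1 : ℚ) = (s.map MvPolynomial.X).prod := by
  induction s using Multiset.induction with
  | empty => simp
  | cons a s ih =>
    rw [Multiset.map_cons, Multiset.prod_cons, ← ih, ← Multiset.singleton_add,
      Multiset.toFinsupp_add, Multiset.toFinsupp_singleton, MvPolynomial.X,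
      MvPolynomial.monomial_mul, one_mul]

/-- A criterion for a module to have the dimension of a symmetric power. -/
lemma finrank_of_symm {n r : ℕ} {M : Type} [AddCommGroup M] [Module ℚ M]
    (G : (Fin (n + 1) → Fin r) → M)
    (hspan : ⊤ ≤ Submodule.span ℚ (Set.range G))
    (hswap : ∀ (i : Fin n) f, G (f ∘ Equiv.swap i.castSucc i.succ) = G f)
    (φ : M →ₗ[ℚ] MvPolynomial (Fin r) ℚ)
    (hφ : ∀ f, φ (G f) = ∏ i, MvPolynomial.X (f i)) :
    Module.finrank ℚ M = (r + n).choose (n + 1) := by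
  have hperm : ∀ (σ : Equiv.Perm (Fin (n + 1))) f, G (f ∘ σ) = G f := by
    intro σ
    have hσ : σ ∈ Submonoid.closure
        (Set.range fun i : Fin n ↦ Equiv.swap i.castSucc i.succ) := by
      rw [Equiv.Perm.mclosure_swap_castSucc_succ]; trivial
    induction hσ using Submonoid.closure_induction with
    | mem x h => obtain ⟨i, rfl⟩ := h; exact hswap i
    | one => intro f; rfl
    | mul x y hx hy ihx ihy =>
      intro f
      have : f ∘ (x * y : Equiv.Perm (Fin (n + 1))) = (f ∘ x) ∘ y := rfl
      rw [this, ihy, ihx]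
  have hrep : ∀ s : Sym (Fin r) (n + 1), ∃ f : Fin (n + 1) → Fin r,
      ((List.ofFn f : List (Fin r)) : Multiset (Fin r)) = s.1 := by
    rintro ⟨s, hs⟩
    induction s using Quotient.inductionOn with
    | h l =>
      have hl : l.length = n + 1 := by simpa using hs
      refine ⟨fun i => l.get (i.cast hl.symm), ?_⟩
      have : List.ofFn (fun i : Fin (n + 1) => l.get (i.cast hl.symm)) = l := by
        apply List.ext_get
        · simp [hl]
        · intro k h1 h2
          rw [List.get_ofFn]; rfl
      rw [this]; rfl
  choose F hF using hrep
  have hli : LinearIndependent ℚ (fun s => G (F s)) := by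
    apply LinearIndependent.of_comp φ
    have : (φ ∘ fun s => G (F s)) = (MvPolynomial.basisMonomials (Fin r) ℚ) ∘
        (fun s : Sym (Fin r) (n + 1) => Multiset.toFinsupp s.1) := by
      funext s
      simp only [Function.comp, MvPolynomial.coe_basisMonomials]
      rw [monomial_toFinsupp, hφ, ← hF s, Multiset.map_coe, Multiset.prod_coe, List.map_ofFn,
        List.prod_ofFn]
      rfl
    rw [this]
    apply (MvPolynomial.basisMonomials (Fin r) ℚ).linearIndependent.comp
    intro s t hst
    exact Subtype.ext (Multiset.toFinsupp.injective hst)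
  have hsp : ⊤ ≤ Submodule.span ℚ (Set.range fun s => G (F s)) := by
    refine hspan.trans (Submodule.span_mono ?_)
    rintro _ ⟨f, rfl⟩
    let s : Sym (Fin r) (n + 1) := ⟨(List.ofFn f : List (Fin r)), by simp⟩
    obtain ⟨σ, hσ⟩ := exists_perm_of_ofFn_perm f (F s) (Multiset.coe_eq_coe.1 (hF s)).symm
    exact ⟨s, by simp only [hσ, hperm]⟩
  rw [Module.finrank_eq_card_basis (Module.Basis.mk hli hsp), Sym.card_sym_eq_choose,
    Fintype.card_fin]
  rfl

lemma span_eq_top_of {M : Type} [AddCommGroup M] [Module ℚ M] (S : Set M)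
    (h : (Submodule.span ℚ S).mkQ = 0) : ⊤ ≤ Submodule.span ℚ S := by
  rw [← Submodule.ker_mkQ (Submodule.span ℚ S), h, LinearMap.ker_zero]

lemma sqm_comm (x y : V) : sqm V x y = sqm V y x := by
  refine (Submodule.Quotient.eq _).2 (Submodule.subset_span ⟨x, y, rfl⟩)

lemma mulC_comm (x y w : V) : mulC V x (sqm V y w) = mulC V y (sqm V x w) := by
  refine (Submodule.Quotient.eq _).2 (Submodule.subset_span ⟨x, y, w, rfl⟩)

variable {V}

lemma sq_ext {M : Type} [AddCommGroup M] [Module ℚ M] {f g : SqM V →ₗ[ℚ] M}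
    {ι : Type} (b : Module.Basis ι ℚ V)
    (h : ∀ i j, f (sqm V (b i) (b j)) = g (sqm V (b i) (b j))) : f = g := by
  apply Submodule.linearMap_qext
  apply TensorProduct.ext
  exact b.ext fun i => b.ext fun j => h i j

lemma cub_ext {M : Type} [AddCommGroup M] [Module ℚ M] {f g : CubM V →ₗ[ℚ] M}
    {ι : Type} (b : Module.Basis ι ℚ V)
    (h : ∀ i j k, f (mulC V (b i) (sqm V (b j) (b k))) = g (mulC V (b i) (sqm V (b j) (b k)))) :
    f = g := by
  apply Submodule.linearMap_qext
  apply TensorProduct.ext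
  exact b.ext fun i => sq_ext b fun j k => h i j k

/-- The linear form attached to a vector. -/
def lin1 {r : ℕ} (b : Module.Basis (Fin r) ℚ V) : V →ₗ[ℚ] MvPolynomial (Fin r) ℚ :=
  b.constr ℚ MvPolynomial.X

/-- The quadratic form attached to an element of the symmetric square. -/
def lin2 {r : ℕ} (b : Module.Basis (Fin r) ℚ V) : SqM V →ₗ[ℚ] MvPolynomial (Fin r) ℚ :=
  (sqRel V).liftQ
    (LinearMap.mul' ℚ (MvPolynomial (Fin r) ℚ) ∘ₗ TensorProduct.map (lin1 b) (lin1 b)) <| by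
    rw [sqRel, Submodule.span_le]
    rintro _ ⟨x, y, rfl⟩
    simp [mul_comm]

lemma lin2_sqm {r : ℕ} (b : Module.Basis (Fin r) ℚ V) (x y : V) :
    lin2 b (sqm V x y) = lin1 b x * lin1 b y := rfl

/-- The cubic form attached to an element of the symmetric cube. -/
def lin3 {r : ℕ} (b : Module.Basis (Fin r) ℚ V) : CubM V →ₗ[ℚ] MvPolynomial (Fin r) ℚ :=
  (cubRel V).liftQ
    (LinearMap.mul' ℚ (MvPolynomial (Fin r) ℚ) ∘ₗ TensorProduct.map (lin1 b) (lin2 b)) <| by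
    rw [cubRel, Submodule.span_le]
    rintro _ ⟨x, y, w, rfl⟩
    simp [lin2_sqm, mul_left_comm]

lemma lin3_mulC {r : ℕ} (b : Module.Basis (Fin r) ℚ V) (x : V) (u : SqM V) :
    lin3 b (mulC V x u) = lin1 b x * lin2 b u := rfl

lemma lin1_basis {r : ℕ} (b : Module.Basis (Fin r) ℚ V) (i : Fin r) :
    lin1 b (b i) = MvPolynomial.X i := by simp [lin1]

lemma finrank_sq {r : ℕ} (b : Module.Basis (Fin r) ℚ V) :
    Module.finrank ℚ (SqM V) = (r + 1).choose 2 := by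
  refine finrank_of_symm (n := 1) (fun f => sqm V (b (f 0)) (b (f 1))) ?_ ?_ (lin2 b) ?_
  · apply span_eq_top_of
    refine sq_ext b fun i j => ?_
    refine (Submodule.Quotient.mk_eq_zero _).2 (Submodule.subset_span ⟨![i, j], rfl⟩)
  · intro i f
    fin_cases i
    exact sqm_comm V (b (f 1)) (b (f 0))
  · intro f
    simp [lin2_sqm, lin1_basis, Fin.prod_univ_succ]

lemma finrank_cub {r : ℕ} (b : Module.Basis (Fin r) ℚ V) :
    Module.finrank ℚ (CubM V) = (r + 2).choose 3 := by
  refine finrank_of_symm (n := 2) (fun f => mulC V (b (f 0)) (sqm V (b (f 1)) (b (f 2))))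
    ?_ ?_ (lin3 b) ?_
  · apply span_eq_top_of
    refine cub_ext b fun i j k => ?_
    refine (Submodule.Quotient.mk_eq_zero _).2 (Submodule.subset_span ⟨![i, j, k], rfl⟩)
  · intro i f
    fin_cases i
    · exact mulC_comm V (b (f 1)) (b (f 0)) (b (f 2))
    · exact congrArg (mulC V (b (f 0))) (sqm_comm V (b (f 2)) (b (f 1)))
  · intro f
    simp [lin3_mulC, lin2_sqm, lin1_basis, Fin.prod_univ_succ]

lemma finrank_alt [FiniteDimensional ℚ W] :
    2 * Module.finrank ℚ (AltM W) + Module.finrank ℚ W = Module.finrank ℚ W ^ 2 := by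
  have hs := finrank_sq (Module.finBasis ℚ W)
  set n := Module.finrank ℚ W with hn
  have h1 := Submodule.finrank_quotient_add_finrank (altRel2 W)
  have h2 := Submodule.finrank_quotient_add_finrank (sqRel W)
  have h3 := Submodule.finrank_sup_add_finrank_inf_eq (altRel2 W) (sqRel W)
  have hW : Module.finrank ℚ (W ⊗[ℚ] W) = n * n := by rw [Module.finrank_tensorProduct]
  have hinf : altRel2 W ⊓ sqRel W = ⊥ := by
    rw [eq_bot_iff]
    rintro z ⟨hz1, hz2⟩
    have e1 : altRel2 W ≤ LinearMap.eqLocus (TensorProduct.comm ℚ W W).toLinearMap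
        LinearMap.id := by
      rw [altRel2, Submodule.span_le]
      rintro _ ⟨x, rfl⟩
      simp
    have e2 : sqRel W ≤ LinearMap.eqLocus (TensorProduct.comm ℚ W W).toLinearMap
        (-LinearMap.id) := by
      rw [sqRel, Submodule.span_le]
      rintro _ ⟨x, y, rfl⟩
      simp
    have a1 : TensorProduct.comm ℚ W W z = z := e1 hz1
    have a2 : TensorProduct.comm ℚ W W z = -z := e2 hz2
    have a3 : z = -z := a1.symm.trans a2
    have a4 : (2 : ℚ) • z = 0 := by
      rw [two_smul]; nth_rewrite 1 [a3]; exact neg_add_cancel z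
    exact (smul_eq_zero.1 a4).resolve_left two_ne_zero
  have hsup : altRel2 W ⊔ sqRel W = ⊤ := by
    rw [eq_top_iff, ← TensorProduct.span_tmul_eq_top, Submodule.span_le]
    rintro _ ⟨x, y, rfl⟩
    have : x ⊗ₜ[ℚ] y = ((1 / 2 : ℚ) • ((x + y) ⊗ₜ[ℚ] (x + y) - x ⊗ₜ[ℚ] x - y ⊗ₜ[ℚ] y))
        + (1 / 2 : ℚ) • (x ⊗ₜ[ℚ] y - y ⊗ₜ[ℚ] x) := by
      simp only [TensorProduct.add_tmul, TensorProduct.tmul_add]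
      module
    rw [this]
    refine Submodule.add_mem_sup (Submodule.smul_mem _ _ ?_) (Submodule.smul_mem _ _ ?_)
    · exact sub_mem (sub_mem (Submodule.subset_span ⟨_, rfl⟩) (Submodule.subset_span ⟨_, rfl⟩))
        (Submodule.subset_span ⟨_, rfl⟩)
    · exact Submodule.subset_span ⟨_, _, rfl⟩
  rw [hinf, hsup, finrank_top, finrank_bot] at h3
  have h4 : 2 * (n + 1).choose 2 = (n + 1) * n := by
    have := Nat.descFactorial_eq_factorial_mul_choose (n + 1) 2
    simp [Nat.descFactorial, Nat.factorial] at this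
    linarith
  rw [hW] at h1 h2 h3
  have h5 : Module.finrank ℚ (AltM W) + Module.finrank ℚ (SqM W) = n * n := by
    change Module.finrank ℚ (SqM W) + _ = _ at h2
    change Module.finrank ℚ (AltM W) + _ = _ at h1
    linarith
  rw [hs] at h5
  nlinarith

lemma finrank_coker {r : ℕ} (b : Module.Basis (Fin r) ℚ V)
    (m : (V ⊗[ℚ] AltM (SqM V)) →ₗ[ℚ] (CubM V ⊗[ℚ] SqM V))
    (hm : ∀ (q : V) (u v : SqM V),
      m (q ⊗ₜ[ℚ] wdg (SqM V) u v) = mulC V q u ⊗ₜ[ℚ] v - mulC V q v ⊗ₜ[ℚ] u) :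
    Module.finrank ℚ ((CubM V ⊗[ℚ] SqM V) ⧸ LinearMap.range m) = (r + 4).choose 5 := by
  let H : V → V → V → V → V → (CubM V ⊗[ℚ] SqM V) ⧸ LinearMap.range m := fun x y z u v =>
    (LinearMap.range m).mkQ (mulC V x (sqm V y z) ⊗ₜ[ℚ] sqm V u v)
  have H1 : ∀ x y z u v, H x y z u v = H y x z u v := by
    intro x y z u v
    simp only [H, mulC_comm V x y z]
  have H2 : ∀ x y z u v, H x y z u v = H x z y u v := by
    intro x y z u v
    simp only [H, sqm_comm V y z]
  have H3 : ∀ x y z u v, H x y z u v = H x y z v u := by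
    intro x y z u v
    simp only [H, sqm_comm V u v]
  have H4 : ∀ x y z u v, H x y z u v = H x u v y z := by
    intro x y z u v
    exact (Submodule.Quotient.eq _).2 ⟨_, hm x (sqm V y z) (sqm V u v)⟩
  have H5 : ∀ x y z u v, H x y z u v = H x y u z v := by
    intro x y z u v
    rw [H2 x y z u v, H1 x z y u v, H4 z x y u v, H1 z u v x y, H4 u z v x y, H1 u x y z v,
      H2 x u y z v]
  let φ : ((CubM V ⊗[ℚ] SqM V) ⧸ LinearMap.range m) →ₗ[ℚ] MvPolynomial (Fin r) ℚ :=
    (LinearMap.range m).liftQ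
      (LinearMap.mul' ℚ (MvPolynomial (Fin r) ℚ) ∘ₗ TensorProduct.map (lin3 b) (lin2 b)) <| by
      rw [LinearMap.range_le_ker_iff]
      apply TensorProduct.ext
      ext q : 1
      apply Submodule.linearMap_qext
      apply TensorProduct.ext
      refine LinearMap.ext fun u => LinearMap.ext fun v => ?_
      change (LinearMap.mul' ℚ (MvPolynomial (Fin r) ℚ) ∘ₗ TensorProduct.map (lin3 b) (lin2 b))
        (m (q ⊗ₜ[ℚ] wdg (SqM V) u v)) = 0
      rw [hm]
      simp only [LinearMap.comp_apply, map_sub, TensorProduct.map_tmul, LinearMap.mul'_apply,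
        lin3_mulC]
      ring
  refine finrank_of_symm (n := 4)
    (fun f => H (b (f 0)) (b (f 1)) (b (f 2)) (b (f 3)) (b (f 4))) ?_ ?_ φ ?_
  · apply span_eq_top_of
    apply Submodule.linearMap_qext
    apply TensorProduct.ext
    refine cub_ext b fun i j k => sq_ext b fun p q => ?_
    refine (Submodule.Quotient.mk_eq_zero _).2 (Submodule.subset_span ⟨![i, j, k, p, q], rfl⟩)
  · intro i f
    fin_cases i
    · exact H1 (b (f 1)) (b (f 0)) (b (f 2)) (b (f 3)) (b (f 4))
    · exact H2 (b (f 0)) (b (f 2)) (b (f 1)) (b (f 3)) (b (f 4))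
    · exact H5 (b (f 0)) (b (f 1)) (b (f 3)) (b (f 2)) (b (f 4))
    · exact H3 (b (f 0)) (b (f 1)) (b (f 2)) (b (f 4)) (b (f 3))
  · intro f
    change lin3 b _ * lin2 b _ = _
    simp only [lin3_mulC, lin2_sqm, lin1_basis]
    rw [Fin.prod_univ_five (fun i => (MvPolynomial.X (f i) : MvPolynomial (Fin r) ℚ))]
    ring

lemma dim_arith (r S C A Q K R : ℕ) (hS : S = (r + 1).choose 2) (hC : C = (r + 2).choose 3)
    (hQ : Q = (r + 4).choose 5) (hA : 2 * A + S = S ^ 2) (h1 : R + K = r * A)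
    (h2 : Q + R = C * S) : K = 6 * (r + 2).choose 5 := by
  have e1 := Nat.descFactorial_eq_factorial_mul_choose (r + 1) 2
  have e2 := Nat.descFactorial_eq_factorial_mul_choose (r + 2) 3
  have e3 := Nat.descFactorial_eq_factorial_mul_choose (r + 4) 5
  have e4 := Nat.descFactorial_eq_factorial_mul_choose (r + 2) 5
  rw [← hS] at e1
  rw [← hC] at e2
  rw [← hQ] at e3
  generalize (r + 2).choose 5 = T at *
  have e4' : ((r : ℚ) + 2) * (r + 1) * r * (r - 1) * (r - 2) = 120 * T := by
    rcases r with _ | _ | s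
    · simp [Nat.descFactorial, Nat.factorial] at e4 ⊢; exact e4
    · simp [Nat.descFactorial, Nat.factorial] at e4 ⊢; exact e4
    · simp [Nat.descFactorial, Nat.factorial] at e4
      have := congrArg (Nat.cast : ℕ → ℚ) e4
      push_cast at this ⊢
      linarith
  simp [Nat.descFactorial, Nat.factorial] at e1 e2 e3
  qify at *
  have s1 : (S : ℚ) = (r + 1) * r / 2 := by linarith
  have s2 : (C : ℚ) = (r + 2) * (r + 1) * r / 6 := by linarith
  have s3 : (Q : ℚ) = (r + 4) * (r + 3) * (r + 2) * (r + 1) * r / 120 := by linarith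
  have s4 : (A : ℚ) = (S ^ 2 - S) / 2 := by linarith
  have s5 : (T : ℚ) = (r + 2) * (r + 1) * r * (r - 1) * (r - 2) / 120 := by linarith
  have s6 : (K : ℚ) = r * A - (C * S - Q) := by linarith
  rw [s6, s4, s5, s3, s2, s1]
  ring

variable (V)

/-- **Lemma 2.1(i).** If `V` is a `ℚ`-vector space of dimension `r`, then the kernel `R(V)`
of the map `m : V ⊗ Λ²(P²V) → P³V ⊗ P²V`, `m(q ⊗ (u ∧ v)) = qu ⊗ v − qv ⊗ u`, has
dimension `6 * (r + 2).choose 5`. -/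
theorem finrank_ker_m [FiniteDimensional ℚ V] (r : ℕ) (hr : Module.finrank ℚ V = r)
    (m : (V ⊗[ℚ] AltM (SqM V)) →ₗ[ℚ] (CubM V ⊗[ℚ] SqM V))
    (hm : ∀ (q : V) (u v : SqM V),
      m (q ⊗ₜ[ℚ] wdg (SqM V) u v) = mulC V q u ⊗ₜ[ℚ] v - mulC V q v ⊗ₜ[ℚ] u) :
    Module.finrank ℚ (LinearMap.ker m) = 6 * Nat.choose (r + 2) 5 := by
  have b : Module.Basis (Fin r) ℚ V := Module.finBasisOfFinrankEq ℚ V hr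
  have hco := finrank_coker b m hm
  have h1 := LinearMap.finrank_range_add_finrank_ker m
  have h2 := Submodule.finrank_quotient_add_finrank (LinearMap.range m)
  rw [Module.finrank_tensorProduct] at h1 h2
  rw [hr] at h1
  exact dim_arith r _ _ _ _ _ _ (finrank_sq b) (finrank_cub b) hco (finrank_alt (SqM V)) h1 h2

end
end

section
/- Let V = ℚ³ with basis x, y, z, and let μ : P²V → ℚ be the linear map with μ(x²) = μ(y²) = μ(z²) = 1 and μ(xy) = μ(yz) = μ(zx) = 0. Let E = ker μ ⊆ P²V and let D = (V ⊗ Λ²E) ∩ R(V) ⊆ V ⊗ Λ²(P²V). Then D is one-dimensional, spanned by the nonzero element Σ_cyc x ⊗ (yz ∧ (y² − z²) − xy ∧ xz), where the sum is over the three cyclic permutations of (x, y, z). -/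
/-!
Common constructions: for a `ℚ`-vector space `V`, the symmetric powers
`P²V, P³V, P⁴V, P⁵V` (as `SqM V`, `CubM V`, `QuarM V`, `QuinM V`), built as iterated
quotients of tensor products, with the multiplication maps between them; the exterior
square `Λ²W` (as `AltM W`) with the wedge map; and the 5-linear map `⋆` (as `star5`).
-/

open TensorProduct

noncomputable section

variable (V W : Type) [AddCommGroup V] [Module ℚ V] [AddCommGroup W] [Module ℚ W]

/-- The polarised coefficient functional `uv ↦ uᵢvⱼ + uⱼvᵢ` on `P²(ℚ³)`. -/
def sF (i j : Fin 3) : SqM (Fin 3 → ℚ) →ₗ[ℚ] ℚ :=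
  (sqRel (Fin 3 → ℚ)).liftQ
    (TensorProduct.lift
      ((LinearMap.mul ℚ ℚ).compl₁₂ (LinearMap.proj i) (LinearMap.proj j)
        + (LinearMap.mul ℚ ℚ).compl₁₂ (LinearMap.proj j) (LinearMap.proj i)))
    (by
      unfold sqRel
      rw [Submodule.span_le]
      rintro _ ⟨u, v, rfl⟩
      simp
      ring)

lemma sF_sqm (i j : Fin 3) (u v : Fin 3 → ℚ) :
    sF i j (sqm _ u v) = u i * v j + u j * v i := by
  simp [sF, sqm]

lemma sqm_comm_s5 (u v : Fin 3 → ℚ) : sqm _ u v = sqm _ v u := by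
  unfold sqm
  simp only [LinearMap.compr₂_apply, TensorProduct.mk_apply]
  rw [← sub_eq_zero, ← map_sub]
  simp only [Submodule.mkQ_apply, Submodule.Quotient.mk_eq_zero]
  exact Submodule.subset_span ⟨u, v, rfl⟩

lemma sF_comm (i j : Fin 3) : sF i j = sF j i := by
  unfold sF
  congr 2
  rw [add_comm]

/-- The polarised coefficient functional on `P³(ℚ³)`. -/
def cF (i j k : Fin 3) : CubM (Fin 3 → ℚ) →ₗ[ℚ] ℚ :=
  (cubRel (Fin 3 → ℚ)).liftQ
    (TensorProduct.lift
      ((LinearMap.mul ℚ ℚ).compl₁₂ (LinearMap.proj i) (sF j k)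
        + (LinearMap.mul ℚ ℚ).compl₁₂ (LinearMap.proj j) (sF i k)
        + (LinearMap.mul ℚ ℚ).compl₁₂ (LinearMap.proj k) (sF i j)))
    (by
      unfold cubRel
      rw [Submodule.span_le]
      rintro _ ⟨u, v, w, rfl⟩
      simp [sF_sqm]
      ring)

lemma cF_mulC (i j k : Fin 3) (q : Fin 3 → ℚ) (u : SqM (Fin 3 → ℚ)) :
    cF i j k (mulC _ q u) = q i * sF j k u + q j * sF i k u + q k * sF i j u := by
  simp [cF, mulC]

lemma mulC_swap (u v w : Fin 3 → ℚ) :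
    mulC _ u (sqm _ v w) = mulC _ v (sqm _ u w) := by
  unfold mulC
  simp only [LinearMap.compr₂_apply, TensorProduct.mk_apply]
  rw [← sub_eq_zero, ← map_sub]
  simp only [Submodule.mkQ_apply, Submodule.Quotient.mk_eq_zero]
  exact Submodule.subset_span ⟨u, v, w, rfl⟩

/-- The functional `u ∧ v ↦ f(u)g(v) - g(u)f(v)` on `Λ²W`. -/
def aF {W : Type} [AddCommGroup W] [Module ℚ W] (f g : W →ₗ[ℚ] ℚ) : AltM W →ₗ[ℚ] ℚ :=
  (altRel2 W).liftQ
    (TensorProduct.lift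
      ((LinearMap.mul ℚ ℚ).compl₁₂ f g - (LinearMap.mul ℚ ℚ).compl₁₂ g f))
    (by
      unfold altRel2
      rw [Submodule.span_le]
      rintro _ ⟨u, rfl⟩
      simp
      ring)

lemma aF_wdg {W : Type} [AddCommGroup W] [Module ℚ W] (f g : W →ₗ[ℚ] ℚ) (u v : W) :
    aF f g (wdg W u v) = f u * g v - g u * f v := by
  simp [aF, wdg]

lemma wdg_self {W : Type} [AddCommGroup W] [Module ℚ W] (u : W) : wdg W u u = 0 := by
  simp only [wdg, LinearMap.compr₂_apply, TensorProduct.mk_apply, Submodule.mkQ_apply,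
    Submodule.Quotient.mk_eq_zero]
  exact Submodule.subset_span ⟨u, rfl⟩

lemma wdg_swap {W : Type} [AddCommGroup W] [Module ℚ W] (u v : W) :
    wdg W v u = - wdg W u v := by
  have h := wdg_self (u + v)
  simp only [map_add, LinearMap.add_apply, wdg_self, zero_add, add_zero] at h
  rw [eq_neg_iff_add_eq_zero, ← h]

/-- The coordinate functionals on `V ⊗ Λ²(P²V)`. -/
def pF (i b c d e : Fin 3) : ((Fin 3 → ℚ) ⊗[ℚ] AltM (SqM (Fin 3 → ℚ))) →ₗ[ℚ] ℚ :=
  TensorProduct.lift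
    ((LinearMap.mul ℚ ℚ).compl₁₂ (LinearMap.proj i) (aF (sF b c) (sF d e)))

lemma pF_tmul (i b c d e : Fin 3) (q : Fin 3 → ℚ) (u v : SqM (Fin 3 → ℚ)) :
    pF i b c d e (q ⊗ₜ[ℚ] wdg _ u v) = q i * (sF b c u * sF d e v - sF d e u * sF b c v) := by
  simp [pF, aF_wdg]

lemma sq_ind {p : SqM (Fin 3 → ℚ) → Prop} (h0 : p 0) (h : ∀ u v, p (sqm _ u v))
    (ha : ∀ a b, p a → p b → p (a + b)) (u : SqM (Fin 3 → ℚ)) : p u := by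
  obtain ⟨t, rfl⟩ := (sqRel (Fin 3 → ℚ)).mkQ_surjective u
  induction t using TensorProduct.induction_on with
  | zero => simpa using h0
  | tmul a b => exact h a b
  | add a b iha ihb => rw [map_add]; exact ha _ _ iha ihb

lemma top_ind {p : ((Fin 3 → ℚ) ⊗[ℚ] AltM (SqM (Fin 3 → ℚ))) → Prop} (h0 : p 0)
    (h : ∀ q u v, p (q ⊗ₜ[ℚ] wdg _ u v))
    (ha : ∀ a b, p a → p b → p (a + b)) (w) : p w := by
  induction w using TensorProduct.induction_on with
  | zero => exact h0
  | add a b iha ihb => exact ha _ _ iha ihb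
  | tmul q r =>
    obtain ⟨t, rfl⟩ := (altRel2 (SqM (Fin 3 → ℚ))).mkQ_surjective r
    induction t using TensorProduct.induction_on with
    | zero => simpa using h0
    | tmul a b => exact h q a b
    | add a b iha ihb => rw [map_add, TensorProduct.tmul_add]; exact ha _ _ iha ihb

/-- Standard basis vectors. -/
def ee (i : Fin 3) : Fin 3 → ℚ := Pi.single i 1

lemma vec_expand (q : Fin 3 → ℚ) : q = ∑ i, q i • ee i := by
  ext j
  simp [ee, Finset.sum_apply, Pi.single_apply]

lemma sq_expand (u : SqM (Fin 3 → ℚ)) :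
    u = ∑ b, ∑ c, ((1 / 2 : ℚ) * sF b c u) • sqm _ (ee b) (ee c) := by
  induction u using sq_ind with
  | h0 => simp
  | ha a b iha ihb =>
    simp only [map_add, mul_add, add_smul, Finset.sum_add_distrib]
    rw [← iha, ← ihb]
  | h u v =>
    have h1 : sqm _ u v = ∑ b, ∑ c, (u b * v c) • sqm _ (ee b) (ee c) := by
      conv_lhs => rw [vec_expand u, vec_expand v]
      simp only [map_sum, LinearMap.sum_apply, map_smul, LinearMap.smul_apply, Finset.smul_sum,
        smul_smul]
      rw [Finset.sum_comm]
      simp only [mul_comm]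
    have h2 : sqm _ u v = ∑ b, ∑ c, (u c * v b) • sqm _ (ee b) (ee c) := by
      rw [h1, Finset.sum_comm]
      simp only [sqm_comm_s5 (ee _) (ee _)]
    have h3 : sqm _ u v = (1 / 2 : ℚ) • (sqm _ u v + sqm _ u v) := by
      rw [← two_smul ℚ, smul_smul]; norm_num
    rw [h3]
    nth_rewrite 1 [h1]
    nth_rewrite 1 [h2]
    simp only [← Finset.sum_add_distrib, ← add_smul, Finset.smul_sum, smul_smul, ← h3, sF_sqm]

lemma smul_aux {M : Type} [AddCommGroup M] [Module ℚ M] (a b c d : ℚ) (T : M)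
    (h : a * (b - c) = d) : a • (b • T - c • T) = d • T := by
  rw [← h, mul_smul, sub_smul]

lemma top_expand (w : (Fin 3 → ℚ) ⊗[ℚ] AltM (SqM (Fin 3 → ℚ))) :
    w = ∑ i, ∑ b, ∑ c, ∑ d, ∑ e, ((1 / 8 : ℚ) * pF i b c d e w) •
      (ee i ⊗ₜ[ℚ] wdg _ (sqm _ (ee b) (ee c)) (sqm _ (ee d) (ee e))) := by
  induction w using top_ind with
  | h0 => simp
  | ha a b iha ihb =>
    simp only [map_add, mul_add, add_smul, Finset.sum_add_distrib]
    rw [← iha, ← ihb]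
  | h q u v =>
    have key : ∀ u v : SqM (Fin 3 → ℚ), q ⊗ₜ[ℚ] wdg _ u v =
        ∑ i, ∑ b, ∑ c, ∑ d, ∑ e, ((1 / 4 : ℚ) * (q i * (sF b c u * sF d e v))) •
      (ee i ⊗ₜ[ℚ] wdg _ (sqm _ (ee b) (ee c)) (sqm _ (ee d) (ee e))) := by
      intro u v
      have e1 : ∀ r : AltM (SqM (Fin 3 → ℚ)), q ⊗ₜ[ℚ] r = ∑ i, q i • (ee i ⊗ₜ[ℚ] r) := by
        intro r
        conv_lhs => rw [vec_expand q]
        simp only [TensorProduct.sum_tmul, TensorProduct.smul_tmul']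
      have e2 : ∀ t, wdg _ u t = ∑ b, ∑ c,
          ((1 / 2 : ℚ) * sF b c u) • wdg _ (sqm _ (ee b) (ee c)) t := by
        intro t
        conv_lhs => rw [sq_expand u]
        simp only [map_sum, LinearMap.sum_apply, map_smul, LinearMap.smul_apply]
      have e3 : ∀ t, wdg _ t v = ∑ d, ∑ e,
          ((1 / 2 : ℚ) * sF d e v) • wdg _ t (sqm _ (ee d) (ee e)) := by
        intro t
        conv_lhs => rw [sq_expand v]
        simp only [map_sum, map_smul]
      rw [e1, e2]
      refine Finset.sum_congr rfl fun i _ => ?_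
      simp only [TensorProduct.tmul_sum, TensorProduct.tmul_smul, Finset.smul_sum]
      refine Finset.sum_congr rfl fun b _ => Finset.sum_congr rfl fun c _ => ?_
      rw [e3]
      simp only [TensorProduct.tmul_sum, TensorProduct.tmul_smul, Finset.smul_sum, smul_smul]
      refine Finset.sum_congr rfl fun d _ => Finset.sum_congr rfl fun e _ => ?_
      congr 1
      ring
    have h3 : q ⊗ₜ[ℚ] wdg _ u v =
        (1 / 2 : ℚ) • (q ⊗ₜ[ℚ] wdg _ u v - q ⊗ₜ[ℚ] wdg _ v u) := by
      rw [wdg_swap u v, TensorProduct.tmul_neg, sub_neg_eq_add, ← two_smul ℚ, smul_smul]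
      norm_num
    simp only [pF_tmul]
    rw [h3, key u v, key v u]
    simp only [← Finset.sum_sub_distrib, Finset.smul_sum]
    refine Finset.sum_congr rfl fun i _ => Finset.sum_congr rfl fun b _ =>
      Finset.sum_congr rfl fun c _ => Finset.sum_congr rfl fun d _ =>
      Finset.sum_congr rfl fun e _ => ?_
    refine smul_aux (1 / 2) (1 / 4 * (q i * (sF b c u * sF d e v)))
      (1 / 4 * (q i * (sF b c v * sF d e u)))
      (1 / 8 * (q i * (sF b c u * sF d e v - sF d e u * sF b c v)))
      (ee i ⊗ₜ[ℚ] wdg _ (sqm _ (ee b) (ee c)) (sqm _ (ee d) (ee e))) ?_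
    ring

set_option maxHeartbeats 4000000 in
lemma lin_alg (P : Fin 3 → Fin 3 → Fin 3 → Fin 3 → Fin 3 → ℚ)
    (h1 : ∀ i b c d e, P i b c d e = P i c b d e)
    (ha : ∀ i b c d e, P i b c d e = - P i d e b c)
    (ht : ∀ i d e, P i 0 0 d e + P i 1 1 d e + P i 2 2 d e = 0)
    (hc : ∀ a b c d e, P a b c d e + P b a c d e + P c a b d e = 0)
    (h0 : P 0 0 1 0 2 = 0) (i b c d e : Fin 3) : P i b c d e = 0 := by
  have h2 : ∀ i b c d e, P i b c d e = P i b c e d := fun i b c d e => by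
    rw [ha, h1, ha i b c e d]
  have red : ∀ Q : Fin 3 → Fin 3 → Prop, (∀ b c, Q b c → Q c b) → Q 0 0 → Q 0 1 → Q 0 2 →
      Q 1 1 → Q 1 2 → Q 2 2 → ∀ b c, Q b c := by
    intro Q hs h00 h01 h02 h11 h12 h22 b c
    fin_cases b <;> fin_cases c <;> first | assumption | exact hs _ _ ‹_›
  have hd : ∀ i b c, P i b c b c = 0 := fun i b c => by linarith [ha i b c b c]
  have s1 : ∀ i d e, P i 1 0 d e = P i 0 1 d e := fun i d e => h1 _ _ _ _ _
  have s2 : ∀ i d e, P i 2 0 d e = P i 0 2 d e := fun i d e => h1 _ _ _ _ _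
  have s3 : ∀ i d e, P i 2 1 d e = P i 1 2 d e := fun i d e => h1 _ _ _ _ _
  have a1 : ∀ i d e, P i 2 2 d e = - P i 0 0 d e - P i 1 1 d e := fun i d e => by
    linarith [ht i d e]
  have s4 : ∀ i d e, P i d e 1 0 = P i d e 0 1 := fun i d e => h2 _ _ _ _ _
  have s5 : ∀ i d e, P i d e 2 0 = P i d e 0 2 := fun i d e => h2 _ _ _ _ _
  have s6 : ∀ i d e, P i d e 2 1 = P i d e 1 2 := fun i d e => h2 _ _ _ _ _
  have a2 : ∀ i d e, P i d e 2 2 = - P i d e 0 0 - P i d e 1 1 := fun i d e => by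
    linarith [ht i d e, ha i d e 0 0, ha i d e 1 1, ha i d e 2 2]
  -- the five independent pairs, ordered `00, 01, 02, 11, 12`
  have w1 : ∀ i, P i 0 1 0 0 = - P i 0 0 0 1 := fun i => ha _ _ _ _ _
  have w2 : ∀ i, P i 0 2 0 0 = - P i 0 0 0 2 := fun i => ha _ _ _ _ _
  have w3 : ∀ i, P i 1 1 0 0 = - P i 0 0 1 1 := fun i => ha _ _ _ _ _
  have w4 : ∀ i, P i 1 2 0 0 = - P i 0 0 1 2 := fun i => ha _ _ _ _ _
  have w5 : ∀ i, P i 0 2 0 1 = - P i 0 1 0 2 := fun i => ha _ _ _ _ _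
  have w6 : ∀ i, P i 1 1 0 1 = - P i 0 1 1 1 := fun i => ha _ _ _ _ _
  have w7 : ∀ i, P i 1 2 0 1 = - P i 0 1 1 2 := fun i => ha _ _ _ _ _
  have w8 : ∀ i, P i 1 1 0 2 = - P i 0 2 1 1 := fun i => ha _ _ _ _ _
  have w9 : ∀ i, P i 1 2 0 2 = - P i 0 2 1 2 := fun i => ha _ _ _ _ _
  have w10 : ∀ i, P i 1 2 1 1 = - P i 1 1 1 2 := fun i => ha _ _ _ _ _
  have key : ∀ d e, (P 0 0 0 d e = 0 ∧ P 1 1 1 d e = 0 ∧ P 2 2 2 d e = 0) ∧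
      (2 * P 0 0 1 d e + P 1 0 0 d e = 0 ∧ 2 * P 0 0 2 d e + P 2 0 0 d e = 0 ∧
       2 * P 1 0 1 d e + P 0 1 1 d e = 0 ∧ 2 * P 1 1 2 d e + P 2 1 1 d e = 0 ∧
       2 * P 2 0 2 d e + P 0 2 2 d e = 0 ∧ 2 * P 2 1 2 d e + P 1 2 2 d e = 0) ∧
      P 0 1 2 d e + P 1 0 2 d e + P 2 0 1 d e = 0 := by
    intro d e
    refine ⟨⟨?_, ?_, ?_⟩, ⟨?_, ?_, ?_, ?_, ?_, ?_⟩, ?_⟩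
    · linarith [hc 0 0 0 d e]
    · linarith [hc 1 1 1 d e]
    · linarith [hc 2 2 2 d e]
    · linarith [hc 0 0 1 d e]
    · linarith [hc 0 0 2 d e]
    · linarith [hc 1 1 0 d e, s1 1 d e]
    · linarith [hc 1 1 2 d e]
    · linarith [hc 2 2 0 d e, s2 2 d e]
    · linarith [hc 2 2 1 d e, s3 2 d e]
    · linarith [hc 0 1 2 d e]
  obtain k1 := key 0 0
  obtain k2 := key 0 1
  obtain k3 := key 0 2
  obtain k4 := key 1 1
  obtain k5 := key 1 2
  simp only [a1, hd, w1, w2, w3, w4, w5, w6, w7, w8, w9, w10]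
    at k1 k2 k3 k4 k5
  clear key hc ht ha h1 h2
  have fin : ∀ i : Fin 3, (P i 0 0 0 1 = 0 ∧ P i 0 0 0 2 = 0 ∧ P i 0 0 1 1 = 0 ∧
      P i 0 0 1 2 = 0 ∧ P i 0 1 0 2 = 0) ∧ P i 0 1 1 1 = 0 ∧ P i 0 1 1 2 = 0 ∧
      P i 0 2 1 1 = 0 ∧ P i 0 2 1 2 = 0 ∧ P i 1 1 1 2 = 0 := by
    intro i
    fin_cases i <;> simp only [Fin.zero_eta, Fin.mk_one, Fin.reduceFinMk] <;>
      refine ⟨⟨?_, ?_, ?_, ?_, ?_⟩, ?_, ?_, ?_, ?_, ?_⟩ <;> linarith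
  have f1 := fun i => (fin i).1
  have f2 := fun i => (fin i).2
  simp only [forall_and] at f1 f2
  obtain ⟨f1, f3, f4, f5, f6⟩ := f1
  obtain ⟨f7, f8, f9, f10, f11⟩ := f2
  fin_cases b <;> fin_cases c <;> fin_cases d <;> fin_cases e <;>
    simp [a1, a2, s1, s2, s3, s4, s5, s6, hd, w1, w2, w3, w4, w5, w6, w7, w8, w9, w10,
      f1, f3, f4, f5, f6, f7, f8, f9, f10, f11]

lemma pF_mul (m : ((Fin 3 → ℚ) ⊗[ℚ] AltM (SqM (Fin 3 → ℚ)))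
        →ₗ[ℚ] (CubM (Fin 3 → ℚ) ⊗[ℚ] SqM (Fin 3 → ℚ)))
    (hm : ∀ (q : Fin 3 → ℚ) (u v : SqM (Fin 3 → ℚ)),
      m (q ⊗ₜ[ℚ] wdg (SqM (Fin 3 → ℚ)) u v)
        = mulC (Fin 3 → ℚ) q u ⊗ₜ[ℚ] v - mulC (Fin 3 → ℚ) q v ⊗ₜ[ℚ] u)
    (a b c d e : Fin 3) (w : (Fin 3 → ℚ) ⊗[ℚ] AltM (SqM (Fin 3 → ℚ))) :
    pF a b c d e w + pF b a c d e w + pF c a b d e w =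
      TensorProduct.lift ((LinearMap.mul ℚ ℚ).compl₁₂ (cF a b c) (sF d e)) (m w) := by
  induction w using top_ind with
  | h0 => simp
  | ha u v ihu ihv => simp only [map_add, ← ihu, ← ihv]; ring
  | h q u v =>
    rw [hm]
    simp only [pF_tmul, map_sub, TensorProduct.lift.tmul, LinearMap.compl₁₂_apply,
      LinearMap.mul_apply', cF_mulC]
    ring

lemma pF_anti (i b c d e : Fin 3) (w : (Fin 3 → ℚ) ⊗[ℚ] AltM (SqM (Fin 3 → ℚ))) :
    pF i b c d e w = - pF i d e b c w := by
  induction w using top_ind with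
  | h0 => simp
  | ha u v ihu ihv => simp only [map_add, ihu, ihv]; ring
  | h q u v => simp only [pF_tmul]; ring

lemma eq_zero_of_pF (w : (Fin 3 → ℚ) ⊗[ℚ] AltM (SqM (Fin 3 → ℚ)))
    (h : ∀ i b c d e, pF i b c d e w = 0) : w = 0 := by
  rw [top_expand w]
  simp [h]

/-- **Example 2.7.** Let `V = ℚ³` with basis `x, y, z` and let `μ : P²V → ℚ` be the
quadratic form with `μ(x²) = μ(y²) = μ(z²) = 1` and `μ(xy) = μ(yz) = μ(zx) = 0`.
With `E = ker μ` and `D = (V ⊗ Λ²E) ∩ R(V)`, the space `D` is one-dimensional, spanned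
by the nonzero element `Σ_cyc x ⊗ (yz ∧ (y² − z²) − xy ∧ xz)`. -/
theorem example_2_7
    (x y z : Fin 3 → ℚ)
    (hx : x = Pi.single 0 1) (hy : y = Pi.single 1 1) (hz : z = Pi.single 2 1)
    (μ : SqM (Fin 3 → ℚ) →ₗ[ℚ] ℚ)
    (hxx : μ (sqm (Fin 3 → ℚ) x x) = 1) (hyy : μ (sqm (Fin 3 → ℚ) y y) = 1)
    (hzz : μ (sqm (Fin 3 → ℚ) z z) = 1)
    (hxy : μ (sqm (Fin 3 → ℚ) x y) = 0) (hyz : μ (sqm (Fin 3 → ℚ) y z) = 0)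
    (hzx : μ (sqm (Fin 3 → ℚ) z x) = 0)
    (m : ((Fin 3 → ℚ) ⊗[ℚ] AltM (SqM (Fin 3 → ℚ)))
        →ₗ[ℚ] (CubM (Fin 3 → ℚ) ⊗[ℚ] SqM (Fin 3 → ℚ)))
    (hm : ∀ (q : Fin 3 → ℚ) (u v : SqM (Fin 3 → ℚ)),
      m (q ⊗ₜ[ℚ] wdg (SqM (Fin 3 → ℚ)) u v)
        = mulC (Fin 3 → ℚ) q u ⊗ₜ[ℚ] v - mulC (Fin 3 → ℚ) q v ⊗ₜ[ℚ] u)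
    (gen : (Fin 3 → ℚ) ⊗[ℚ] AltM (SqM (Fin 3 → ℚ)))
    (hgen : gen =
        x ⊗ₜ[ℚ] (wdg (SqM (Fin 3 → ℚ)) (sqm (Fin 3 → ℚ) y z)
            (sqm (Fin 3 → ℚ) y y - sqm (Fin 3 → ℚ) z z)
          - wdg (SqM (Fin 3 → ℚ)) (sqm (Fin 3 → ℚ) x y) (sqm (Fin 3 → ℚ) x z))
      + y ⊗ₜ[ℚ] (wdg (SqM (Fin 3 → ℚ)) (sqm (Fin 3 → ℚ) z x)
            (sqm (Fin 3 → ℚ) z z - sqm (Fin 3 → ℚ) x x)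
          - wdg (SqM (Fin 3 → ℚ)) (sqm (Fin 3 → ℚ) y z) (sqm (Fin 3 → ℚ) y x))
      + z ⊗ₜ[ℚ] (wdg (SqM (Fin 3 → ℚ)) (sqm (Fin 3 → ℚ) x y)
            (sqm (Fin 3 → ℚ) x x - sqm (Fin 3 → ℚ) y y)
          - wdg (SqM (Fin 3 → ℚ)) (sqm (Fin 3 → ℚ) z x) (sqm (Fin 3 → ℚ) z y))) :
    gen ≠ 0 ∧
      (Submodule.span ℚ {w : (Fin 3 → ℚ) ⊗[ℚ] AltM (SqM (Fin 3 → ℚ)) |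
          ∃ (q : Fin 3 → ℚ) (u v : SqM (Fin 3 → ℚ)),
            u ∈ LinearMap.ker μ ∧ v ∈ LinearMap.ker μ ∧
              w = q ⊗ₜ[ℚ] wdg (SqM (Fin 3 → ℚ)) u v})
          ⊓ LinearMap.ker m
        = Submodule.span ℚ {gen} := by
  have hμ : ∀ u, sF 0 0 u + sF 1 1 u + sF 2 2 u = 2 * μ u := by
    intro u
    have ex : ee 0 = x := hx.symm
    have ey : ee 1 = y := hy.symm
    have ez : ee 2 = z := hz.symm
    conv_rhs => rw [sq_expand u]
    simp only [map_add, map_smul, Fin.sum_univ_three, ex, ey, ez, hxx, hyy, hzz, hxy, hyz, hzx,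
      sqm_comm_s5 y x, sqm_comm_s5 z y, sqm_comm_s5 x z, smul_eq_mul]
    ring
  set S := Submodule.span ℚ {w : (Fin 3 → ℚ) ⊗[ℚ] AltM (SqM (Fin 3 → ℚ)) |
          ∃ (q : Fin 3 → ℚ) (u v : SqM (Fin 3 → ℚ)),
            u ∈ LinearMap.ker μ ∧ v ∈ LinearMap.ker μ ∧
              w = q ⊗ₜ[ℚ] wdg (SqM (Fin 3 → ℚ)) u v} with hS
  have htr : ∀ w ∈ S, ∀ i d e,
      pF i 0 0 d e w + pF i 1 1 d e w + pF i 2 2 d e w = 0 := by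
    intro w hw i d e
    induction hw using Submodule.span_induction with
    | zero => simp
    | add a b _ _ iha ihb => simp only [map_add]; linear_combination iha + ihb
    | smul r a _ iha => simp only [map_smul, smul_eq_mul]; linear_combination r * iha
    | mem w hw =>
      obtain ⟨q, u, v, hu, hv, rfl⟩ := hw
      rw [LinearMap.mem_ker] at hu hv
      have h1 := hμ u
      have h2 := hμ v
      rw [hu] at h1
      rw [hv] at h2
      simp only [pF_tmul]
      linear_combination (q i * sF d e v) * h1 - (q i * sF d e u) * h2
  have hker : ∀ w ∈ S, m w = 0 → pF 0 0 1 0 2 w = 0 → w = 0 := by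
    intro w hw hmw h0
    refine eq_zero_of_pF w (lin_alg (fun i b c d e => pF i b c d e w) ?_ ?_ ?_ ?_ h0)
    · intro i b c d e
      simp only [pF, sF_comm b c]
    · exact fun i b c d e => pF_anti i b c d e w
    · exact htr w hw
    · intro a b c d e
      simp only [pF_mul m hm, hmw, map_zero]
  have hmem : ∀ q u v, μ u = 0 → μ v = 0 → q ⊗ₜ[ℚ] wdg (SqM (Fin 3 → ℚ)) u v ∈ S :=
    fun q u v hu hv => Submodule.subset_span ⟨q, u, v, hu, hv, rfl⟩
  have hgS : gen ∈ S := by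
    rw [hgen]
    simp only [TensorProduct.tmul_sub]
    have hyx : μ (sqm _ y x) = 0 := by rw [sqm_comm_s5, hxy]
    have hzy : μ (sqm _ z y) = 0 := by rw [sqm_comm_s5, hyz]
    have hxz : μ (sqm _ x z) = 0 := by rw [sqm_comm_s5, hzx]
    refine S.add_mem (S.add_mem (S.sub_mem ?_ ?_) (S.sub_mem ?_ ?_)) (S.sub_mem ?_ ?_) <;>
      apply hmem <;> simp [hxx, hyy, hzz, hxy, hyz, hzx, hyx, hzy, hxz]
  have hgm : m gen = 0 := by
    rw [hgen]
    simp only [TensorProduct.tmul_sub, map_add, map_sub, hm, TensorProduct.sub_tmul]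
    rw [sqm_comm_s5 z x, sqm_comm_s5 y x, sqm_comm_s5 z y]
    simp only [mulC_swap y x, mulC_swap z x, mulC_swap z y, sqm_comm_s5 y x, sqm_comm_s5 z x,
      sqm_comm_s5 z y]
    abel
  have hgp : pF 0 0 1 0 2 gen = -1 := by
    rw [hgen]
    simp only [TensorProduct.tmul_sub, map_add, map_sub, pF_tmul, sF_sqm, hx, hy, hz]
    simp
  refine ⟨?_, ?_⟩
  · intro h
    rw [h, map_zero] at hgp
    norm_num at hgp
  · apply le_antisymm
    · rintro w ⟨hw, hmw⟩
      have hmw' : m w = 0 := hmw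
      rw [Submodule.mem_span_singleton]
      refine ⟨- pF 0 0 1 0 2 w, ?_⟩
      symm
      rw [← sub_eq_zero]
      apply hker
      · exact S.sub_mem hw (S.smul_mem _ hgS)
      · rw [map_sub, map_smul, hmw', hgm, smul_zero, sub_zero]
      · rw [map_sub, map_smul, hgp, smul_eq_mul]
        ring
    · rw [Submodule.span_singleton_le_iff_mem]
      exact ⟨hgS, hgm⟩

end
end

section
/- Let A be a DGA over ℚ and let (α, γ) be a cochain choice. Then the restriction of the map αγ² : H² ⊗ Λ²E → A⁸ to D takes values in the subspace Z⁸ of closed elements. -/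
/-!
Common constructions: for a `ℚ`-vector space `V`, the symmetric powers
`P²V, P³V, P⁴V, P⁵V` (as `SqM V`, `CubM V`, `QuarM V`, `QuinM V`), built as iterated
quotients of tensor products, with the multiplication maps between them; the exterior
square `Λ²W` (as `AltM W`) with the wedge map; and the 5-linear map `⋆` (as `star5`).
-/

open TensorProduct

noncomputable section

variable (V W : Type) [AddCommGroup V] [Module ℚ V] [AddCommGroup W] [Module ℚ W]

/-- A differential graded algebra (DGA) over `ℚ`: an `ℕ`-graded, graded-commutative,
associative unital `ℚ`-algebra with a degree `+1` differential satisfying `d ∘ d = 0`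
and the graded Leibniz rule. -/
structure DGA where
  /-- The underlying type. -/
  carrier : Type
  [ringStr : Ring carrier]
  [algStr : Algebra ℚ carrier]
  /-- The grading `A = ⊕ᵢ Aⁱ`. -/
  grading : ℕ → Submodule ℚ carrier
  one_mem : (1 : carrier) ∈ grading 0
  mul_mem : ∀ {i j : ℕ} {a b : carrier}, a ∈ grading i → b ∈ grading j → a * b ∈ grading (i + j)
  /-- The grading really is a direct sum decomposition. -/
  internal : DirectSum.IsInternal grading
  /-- Graded commutativity. -/
  gcomm : ∀ {i j : ℕ} {a b : carrier}, a ∈ grading i → b ∈ grading j →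
    a * b = ((-1 : ℚ) ^ (i * j)) • (b * a)
  /-- The differential. -/
  d : carrier →ₗ[ℚ] carrier
  d_mem : ∀ {i : ℕ} {a : carrier}, a ∈ grading i → d a ∈ grading (i + 1)
  d_d : ∀ a : carrier, d (d a) = 0
  /-- The graded Leibniz rule. -/
  leibniz : ∀ {i : ℕ} {a : carrier} (b : carrier), a ∈ grading i →
    d (a * b) = d a * b + ((-1 : ℚ) ^ i) • (a * d b)

attribute [instance] DGA.ringStr DGA.algStr

namespace DGA

variable (A : DGA)

/-- The closed elements of degree `i`. -/
def Z (i : ℕ) : Submodule ℚ A.carrier := A.grading i ⊓ LinearMap.ker A.d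

/-- The exact elements of degree `i`, as a submodule of the closed ones. -/
def Bdry (i : ℕ) : Submodule ℚ (A.Z i) :=
  Submodule.comap (A.Z i).subtype (Submodule.map A.d (A.grading (i - 1)))

/-- Degree `i` cohomology of the DGA. -/
abbrev H (i : ℕ) : Type := A.Z i ⧸ A.Bdry i

/-- The projection from closed elements to cohomology classes. -/
def pr (i : ℕ) : A.Z i →ₗ[ℚ] A.H i := (A.Bdry i).mkQ

end DGA

set_option maxHeartbeats 2000000

/-- **Proposition 2.3.** Let `A` be a DGA over `ℚ` with a cochain choice `(α, γ)`:
`α : H² → Z²` is a linear right inverse of the projection and `γ : E → A³` satisfies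
`dγ = α²|_E`, where `E ⊆ P²H²` is the kernel of the cup product map `P²H² → H⁴`.
Then the map `αγ² : H² ⊗ Λ²E → A⁸`, `q ⊗ (e ∧ f) ↦ α(q)γ(e)γ(f)`, takes values in the
subspace `Z⁸` of closed elements when restricted to `D = (H² ⊗ Λ²E) ∩ R(H²)`. -/
theorem alpha_gamma_sq_closed_on_D (A : DGA)
    (cup : SqM (A.H 2) →ₗ[ℚ] A.H 4)
    (hcup : ∀ (x y : A.Z 2) (w : A.Z 4),
      (w : A.carrier) = (x : A.carrier) * (y : A.carrier) →
      cup (sqm (A.H 2) (A.pr 2 x) (A.pr 2 y)) = A.pr 4 w)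
    (m : (A.H 2 ⊗[ℚ] AltM (SqM (A.H 2))) →ₗ[ℚ] (CubM (A.H 2) ⊗[ℚ] SqM (A.H 2)))
    (hm : ∀ (q : A.H 2) (u v : SqM (A.H 2)),
      m (q ⊗ₜ[ℚ] wdg (SqM (A.H 2)) u v)
        = mulC (A.H 2) q u ⊗ₜ[ℚ] v - mulC (A.H 2) q v ⊗ₜ[ℚ] u)
    (ι : (A.H 2 ⊗[ℚ] AltM ↥(LinearMap.ker cup)) →ₗ[ℚ] (A.H 2 ⊗[ℚ] AltM (SqM (A.H 2))))
    (hι : ∀ (q : A.H 2) (e e' : ↥(LinearMap.ker cup)),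
      ι (q ⊗ₜ[ℚ] wdg ↥(LinearMap.ker cup) e e')
        = q ⊗ₜ[ℚ] wdg (SqM (A.H 2)) (e : SqM (A.H 2)) (e' : SqM (A.H 2)))
    (α : A.H 2 →ₗ[ℚ] A.Z 2) (hα : ∀ h, A.pr 2 (α h) = h)
    (αsq : SqM (A.H 2) →ₗ[ℚ] A.Z 4)
    (hαsq : ∀ (x y : A.H 2) (w : A.Z 4),
      (w : A.carrier) = (α x : A.carrier) * (α y : A.carrier) →
      αsq (sqm (A.H 2) x y) = w)
    (γ : ↥(LinearMap.ker cup) →ₗ[ℚ] A.carrier)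
    (hγmem : ∀ e, γ e ∈ A.grading 3)
    (hγd : ∀ e : ↥(LinearMap.ker cup), A.d (γ e) = (αsq (e : SqM (A.H 2)) : A.carrier))
    (Φ : (A.H 2 ⊗[ℚ] AltM ↥(LinearMap.ker cup)) →ₗ[ℚ] A.carrier)
    (hΦ : ∀ (q : A.H 2) (e e' : ↥(LinearMap.ker cup)),
      Φ (q ⊗ₜ[ℚ] wdg ↥(LinearMap.ker cup) e e') = (α q : A.carrier) * (γ e * γ e')) :
    ∀ t : A.H 2 ⊗[ℚ] AltM ↥(LinearMap.ker cup), m (ι t) = 0 → Φ t ∈ A.Z 8 := by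
  obtain ⟨γext, hγext⟩ := LinearMap.exists_extend γ
  have hγext_apply : ∀ e : ↥(LinearMap.ker cup), γext (e : SqM (A.H 2)) = γ e := fun e => by
    rw [← hγext]; rfl
  have hα2 : ∀ x, (α x : A.carrier) ∈ A.grading 2 := fun x => (α x).2.1
  have hαd : ∀ x, A.d (α x : A.carrier) = 0 := fun x => (α x).2.2
  have hs4 : ∀ u, (αsq u : A.carrier) ∈ A.grading 4 := fun u => (αsq u).2.1
  have hprod : ∀ x y : A.H 2, (αsq (sqm (A.H 2) x y) : A.carrier)
      = (α x : A.carrier) * (α y : A.carrier) := by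
    intro x y
    have hz : (α x : A.carrier) * (α y : A.carrier) ∈ A.Z 4 := by
      refine ⟨A.mul_mem (hα2 x) (hα2 y), ?_⟩
      rw [SetLike.mem_coe, LinearMap.mem_ker, A.leibniz _ (hα2 x), hαd, hαd]
      simp
    rw [hαsq x y ⟨_, hz⟩ rfl]
  -- the map `α³ : P³H² → A`
  let β : A.H 2 ⊗[ℚ] SqM (A.H 2) →ₗ[ℚ] A.carrier :=
    TensorProduct.lift ((LinearMap.mul ℚ A.carrier).compl₁₂
      ((A.Z 2).subtype ∘ₗ α) ((A.Z 4).subtype ∘ₗ αsq))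
  have hβ : ∀ q u, β (q ⊗ₜ[ℚ] u) = (α q : A.carrier) * (αsq u : A.carrier) := fun q u => by
    simp [β]
  have hker : cubRel (A.H 2) ≤ LinearMap.ker β := by
    refine Submodule.span_le.2 ?_
    rintro _ ⟨x, y, w, rfl⟩
    have hc : (α x : A.carrier) * (α y : A.carrier) = (α y : A.carrier) * (α x : A.carrier) := by
      rw [A.gcomm (hα2 x) (hα2 y)]; norm_num
    rw [SetLike.mem_coe, LinearMap.mem_ker, map_sub, hβ, hβ, hprod, hprod, ← mul_assoc,
      ← mul_assoc, hc, sub_self]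
  let α3 : CubM (A.H 2) →ₗ[ℚ] A.carrier := (cubRel (A.H 2)).liftQ β hker
  have hα3 : ∀ q u, α3 (mulC (A.H 2) q u) = (α q : A.carrier) * (αsq u : A.carrier) :=
    fun q u => hβ q u
  let Ψ : CubM (A.H 2) ⊗[ℚ] SqM (A.H 2) →ₗ[ℚ] A.carrier :=
    TensorProduct.lift ((LinearMap.mul ℚ A.carrier).compl₁₂ α3 γext)
  have hΨ : ∀ c u, Ψ (c ⊗ₜ[ℚ] u) = α3 c * γext u := fun c u => by
    simp [Ψ]
  -- on generators
  have hgen : ∀ (q : A.H 2) (e f : ↥(LinearMap.ker cup)),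
      A.d ((α q : A.carrier) * (γ e * γ f))
        = Ψ (m (ι (q ⊗ₜ[ℚ] wdg ↥(LinearMap.ker cup) e f))) := by
    intro q e f
    have hc : γ e * (αsq (f : SqM (A.H 2)) : A.carrier)
        = (αsq (f : SqM (A.H 2)) : A.carrier) * γ e := by
      rw [A.gcomm (hγmem e) (hs4 f)]; norm_num
    rw [hι, hm, map_sub, hΨ, hΨ, hα3, hα3, hγext_apply, hγext_apply, A.leibniz _ (hα2 q), hαd,
      A.leibniz _ (hγmem e), hγd, hγd, hc]
    norm_num
    noncomm_ring
  have key : ∀ t : A.H 2 ⊗[ℚ] AltM ↥(LinearMap.ker cup),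
      Φ t ∈ A.grading 8 ∧ A.d (Φ t) = Ψ (m (ι t)) := by
    intro t
    induction t using TensorProduct.induction_on with
    | zero => simp
    | add a b ha hb =>
      simp only [map_add]
      exact ⟨add_mem ha.1 hb.1, by rw [ha.2, hb.2]⟩
    | tmul q z =>
      obtain ⟨z, rfl⟩ := Submodule.mkQ_surjective _ z
      induction z using TensorProduct.induction_on with
      | zero => simp
      | add a b ha hb =>
        simp only [map_add, TensorProduct.tmul_add] at ha hb ⊢
        exact ⟨add_mem ha.1 hb.1, by rw [ha.2, hb.2]⟩
      | tmul e f =>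
        change Φ (q ⊗ₜ[ℚ] wdg ↥(LinearMap.ker cup) e f) ∈ A.grading 8 ∧
          A.d (Φ (q ⊗ₜ[ℚ] wdg ↥(LinearMap.ker cup) e f))
            = Ψ (m (ι (q ⊗ₜ[ℚ] wdg ↥(LinearMap.ker cup) e f)))
        refine ⟨?_, ?_⟩
        · rw [hΦ]
          exact A.mul_mem (hα2 q) (A.mul_mem (hγmem e) (hγmem f))
        · rw [hΦ]; exact hgen q e f
  intro t ht
  refine ⟨(key t).1, ?_⟩
  rw [SetLike.mem_coe, LinearMap.mem_ker, (key t).2, ht, map_zero]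

end
end
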